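/- (Theorem 1: Nash-regret bound for projected gradient ascent in Markov α-potential games.) Consider a finite Markov game with payoffs u_i(s,a) ∈ [0,1] for all i, s, a, and write Ā = max_{i∈I}|A_i|. Suppose the game is a Markov α-potential game with α-potential function Φ; let C_Φ > 0 satisfy |Φ(μ',π) − Φ(μ',π')| ≤ C_Φ for all distributions μ' on S and all profiles π, π'. Let μ be an initial distribution, and suppose ν is a probability distribution on S and κ̃ ≥ 1 a constant such that d_μ^π(s) ≤ κ̃·ν(s) for every profile π and every state s. Fix T ≥ 1 and take step size η = (1−δ)^{5/2}·√(C_Φ + |I|²·α·T) / (2·|I|·Ā·√T), and assume η ≤ (1−δ)/√Ā. Then the projected gradient-ascent iterates π^{(0)},…,π^{(T)} satisfy Nash-regret(T) ≤ 6√2·√(κ̃·Ā·|I|)·(1−δ)^{−9/4}·(C_Φ/T + |I|²·α)^{1/4}. -/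

import Mathlib

open Finset

section MarkovGameDefs

variable {S : Type*} {I : Type*} {A : I → Type*}

/-- A probability vector on a finite set. -/
def IsProbVec {α : Type*} [Fintype α] (p : α → ℝ) : Prop :=
  (∀ a, 0 ≤ p a) ∧ ∑ a, p a = 1

/-- A stationary policy profile: each player's policy gives a probability vector at each state. -/
def IsPolicy [Fintype I] [∀ i, Fintype (A i)] (π : ∀ i, S → A i → ℝ) : Prop :=
  ∀ i s, IsProbVec (π i s)

/-- A transition kernel. -/
def IsKernel [Fintype S] (P : S → (∀ i, A i) → S → ℝ) : Prop :=
  ∀ s a, IsProbVec (fun s' => P s a s')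

/-- Product distribution on joint actions induced by a profile. -/
noncomputable def jointDist [Fintype I] (π : ∀ i, S → A i → ℝ) (s : S) (a : ∀ i, A i) : ℝ :=
  ∏ i, π i s (a i)

/-- Induced transition matrix `P^π`. -/
noncomputable def transMat [Fintype S] [Fintype I] [DecidableEq I] [∀ i, Fintype (A i)]
    (P : S → (∀ i, A i) → S → ℝ) (π : ∀ i, S → A i → ℝ) (s s' : S) : ℝ :=
  ∑ a : ∀ j, A j, jointDist π s a * P s a s'

/-- Expected one-stage payoff `u(s,π)`. -/
noncomputable def expPay [Fintype I] [DecidableEq I] [∀ i, Fintype (A i)]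
    (u : S → (∀ i, A i) → ℝ) (π : ∀ i, S → A i → ℝ) (s : S) : ℝ :=
  ∑ a : ∀ j, A j, jointDist π s a * u s a

/-- `V` solves the Bellman equation for payoff `u`, kernel `P`, discount `δ`, profile `π`. -/
def IsValueFun [Fintype S] [Fintype I] [DecidableEq I] [∀ i, Fintype (A i)]
    (δ : ℝ) (P : S → (∀ i, A i) → S → ℝ) (u : S → (∀ i, A i) → ℝ)
    (π : ∀ i, S → A i → ℝ) (V : S → ℝ) : Prop :=
  ∀ s, V s = expPay u π s + δ * ∑ s', transMat P π s s' * V s'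

/-- Player `i`'s Q-function, given a value function `V` for player `i` under `π`. -/
noncomputable def Qfun [Fintype S] [Fintype I] [DecidableEq I] [∀ i, Fintype (A i)]
    [∀ i, DecidableEq (A i)]
    (δ : ℝ) (P : S → (∀ i, A i) → S → ℝ) (u : S → (∀ i, A i) → ℝ)
    (π : ∀ i, S → A i → ℝ) (V : S → ℝ) (i : I) (s : S) (ai : A i) : ℝ :=
  ∑ a : ∀ j, A j,
    if a i = ai then
      (∏ j ∈ Finset.univ.erase i, π j s (a j)) * (u s a + δ * ∑ s', P s a s' * V s')
    else 0

/-- Discounted state visitation distribution `d_μ^π`. -/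
noncomputable def dvisit [Fintype S] [DecidableEq S] [Fintype I] [DecidableEq I]
    [∀ i, Fintype (A i)]
    (δ : ℝ) (P : S → (∀ i, A i) → S → ℝ) (π : ∀ i, S → A i → ℝ) (μ : S → ℝ) (s : S) : ℝ :=
  (1 - δ) * ∑' k : ℕ, δ ^ k * ∑ s0, μ s0 * ((Matrix.of (transMat P π)) ^ k) s0 s

/-- Negative entropy `ν(p) = ∑ p log p` (with the convention `0 log 0 = 0`,
which holds automatically since `Real.log 0 = 0`). -/
noncomputable def negent {α : Type*} [Fintype α] (p : α → ℝ) : ℝ :=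
  ∑ a, p a * Real.log (p a)

/-- `Ṽ` solves the Bellman equation of the `τ`-smoothed game for player `i`. -/
def IsSmoothedValueFun [Fintype S] [Fintype I] [DecidableEq I] [∀ i, Fintype (A i)]
    (δ τ : ℝ) (P : S → (∀ i, A i) → S → ℝ) (u : S → (∀ i, A i) → ℝ)
    (π : ∀ i, S → A i → ℝ) (i : I) (Vt : S → ℝ) : Prop :=
  ∀ s, Vt s = expPay u π s - τ * negent (π i s) + δ * ∑ s', transMat P π s s' * Vt s'

/-- Smoothed Q-function `Q̃_i(s,a_i;π)`. -/
noncomputable def Qsmooth [Fintype S] [Fintype I] [DecidableEq I] [∀ i, Fintype (A i)]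
    [∀ i, DecidableEq (A i)]
    (δ τ : ℝ) (P : S → (∀ i, A i) → S → ℝ) (u : S → (∀ i, A i) → ℝ)
    (π : ∀ i, S → A i → ℝ) (Vt : S → ℝ) (i : I) (s : S) (ai : A i) : ℝ :=
  ∑ a : ∀ j, A j,
    if a i = ai then
      (∏ j ∈ Finset.univ.erase i, π j s (a j)) *
        (u s a - τ * negent (π i s) + δ * ∑ s', P s a s' * Vt s')
    else 0

/-- Euclidean (ℓ²) norm on `α → ℝ`. -/
noncomputable def l2norm {α : Type*} [Fintype α] (f : α → ℝ) : ℝ :=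
  Real.sqrt (∑ a, f a ^ 2)

/-- Standard inner product on `α → ℝ`. -/
noncomputable def dotp {α : Type*} [Fintype α] (f g : α → ℝ) : ℝ :=
  ∑ a, f a * g a

/-- `y` is the Euclidean orthogonal projection of `x` onto the probability simplex. -/
noncomputable def IsProjSimplex {α : Type*} [Fintype α] (x y : α → ℝ) : Prop :=
  IsProbVec y ∧ ∀ z, IsProbVec z → l2norm (fun a => y a - x a) ≤ l2norm (fun a => z a - x a)

/-- Softmax (smoothed best response) with temperature `τ`. -/
noncomputable def softmax {α : Type*} [Fintype α] (τ : ℝ) (q : α → ℝ) (a : α) : ℝ :=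
  Real.exp (q a / τ) / ∑ a', Real.exp (q a' / τ)

end MarkovGameDefs

/-!
For a unilateral deviation, the performance-difference lemma writes a player's gain in value as the
average, over the discounted visitation distribution, of the inner product of the Q-function with
the change of policy.

* Ascent: switch the players to their new policies one at a time. The variational inequality of the
  projection says that `Q` gains at least `‖step‖² / η` along the step. For the player being
  switched, `Q` has drifted by at most a multiple of the movement of the players switched before, so
  the potential rises by at least `‖step‖² / η`, up to `α` and an error quadratic in the movement.
  Telescoping over players and over time bounds the total squared movement.
* Gap: the same variational inequality bounds `η ⟨Q, z - π⟩` by `3 ‖step‖` for every `z` in the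
  simplex. Averaging, Jensen's inequality and the mismatch bound `d ≤ κ ν` control the gap by the
  square root of the `ν`-weighted squared movement, and Cauchy-Schwarz over time concludes.

The constant `3` comes from `η ‖Q‖ ≤ 1`, that is `η √n ≤ 1 - δ` with `n` the largest number of
actions. For larger `η` the claimed bound exceeds `2 / (1 - δ)`, which bounds every gap trivially.
-/

section Simplex

variable {X : Type*} [Fintype X] {f p q x y z : X → ℝ} {b η : ℝ}

lemma abs_dotProduct_le (f : X → ℝ) (hp : ∀ a, |p a| ≤ b) : |f ⬝ᵥ p| ≤ (∑ a, |f a|) * b := by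
  calc |f ⬝ᵥ p| ≤ ∑ a, |f a * p a| := abs_sum_le_sum_abs _ _
    _ ≤ ∑ a, |f a| * b := by simp only [abs_mul]; gcongr with a; exact hp a
    _ = (∑ a, |f a|) * b := (sum_mul _ _ _).symm

lemma sum_sqrt_le_sqrt_card_mul_sum {ι : Type*} (s : Finset ι) {f : ι → ℝ} (hf : ∀ i, 0 ≤ f i) :
    ∑ i ∈ s, √(f i) ≤ √(#s * ∑ i ∈ s, f i) := by
  refine Real.le_sqrt_of_sq_le (sq_sum_le_card_mul_sum_sq.trans_eq ?_)
  simp only [Real.sq_sqrt (hf _)]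

namespace IsProbVec

lemma nonempty (hp : IsProbVec p) : Nonempty X := by
  by_contra hX
  rw [not_nonempty_iff] at hX
  simpa using hp.2

lemma dotProduct_const (hp : IsProbVec p) (b : ℝ) : (p ⬝ᵥ fun _ ↦ b) = b := by
  rw [dotProduct, ← sum_mul, hp.2, one_mul]

lemma dotProduct_nonneg (hp : IsProbVec p) (hf : 0 ≤ f) : 0 ≤ p ⬝ᵥ f :=
  sum_nonneg fun a _ ↦ mul_nonneg (hp.1 a) (hf a)

lemma dotProduct_mono (hp : IsProbVec p) (hfq : f ≤ q) : p ⬝ᵥ f ≤ p ⬝ᵥ q :=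
  dotProduct_le_dotProduct_of_nonneg_left hfq hp.1

lemma abs_dotProduct_le (hp : IsProbVec p) (hf : ∀ a, |f a| ≤ b) : |p ⬝ᵥ f| ≤ b := by
  calc |p ⬝ᵥ f| ≤ (∑ a, |p a|) * b := _root_.abs_dotProduct_le p hf
    _ = b := by simp only [abs_of_nonneg (hp.1 _), hp.2, one_mul]

lemma sq_dotProduct_le (hp : IsProbVec p) (f : X → ℝ) :
    (p ⬝ᵥ f) ^ 2 ≤ p ⬝ᵥ fun a ↦ f a ^ 2 :=
  Real.pow_arith_mean_le_arith_mean_pow_of_even univ p f (fun a _ ↦ hp.1 a) hp.2 even_two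

lemma one_le_of_le_mul (hp : IsProbVec p) (hq : IsProbVec q) (h : ∀ a, p a ≤ b * q a) :
    1 ≤ b := by
  calc 1 = ∑ a, p a := hp.2.symm
    _ ≤ ∑ a, b * q a := sum_le_sum fun a _ ↦ h a
    _ = b := by rw [← mul_sum, hq.2, mul_one]

end IsProbVec

lemma l2norm_nonneg (f : X → ℝ) : 0 ≤ l2norm f :=
  Real.sqrt_nonneg _

lemma sq_l2norm (f : X → ℝ) : l2norm f ^ 2 = f ⬝ᵥ f := by
  rw [l2norm, Real.sq_sqrt (sum_nonneg fun a _ ↦ sq_nonneg (f a))]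
  simp only [dotProduct, sq]

lemma l2norm_eq_norm_toLp (f : X → ℝ) : l2norm f = ‖WithLp.toLp 2 f‖ := by
  simp [l2norm, EuclideanSpace.norm_eq]

lemma dotProduct_le_l2norm_mul_l2norm (f p : X → ℝ) : f ⬝ᵥ p ≤ l2norm f * l2norm p :=
  Real.sum_mul_le_sqrt_mul_sqrt univ f p

lemma sum_abs_le_sqrt_card_mul_l2norm (f : X → ℝ) :
    ∑ a, |f a| ≤ √(Fintype.card X) * l2norm f := by
  simpa [l2norm] using Real.sum_mul_le_sqrt_mul_sqrt univ (fun _ ↦ 1) (fun a ↦ |f a|)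

lemma l2norm_le_sqrt_card_mul (hb : 0 ≤ b) (hf : ∀ a, |f a| ≤ b) :
    l2norm f ≤ √(Fintype.card X) * b := by
  calc l2norm f ≤ √(∑ _a : X, b ^ 2) := by
        refine Real.sqrt_le_sqrt (sum_le_sum fun a _ ↦ ?_)
        exact sq_le_sq.2 ((hf a).trans (le_abs_self b))
    _ = √(Fintype.card X) * b := by simp [Real.sqrt_sq hb]

lemma IsProbVec.l2norm_sub_le (hp : IsProbVec p) (hq : IsProbVec q) : l2norm (p - q) ≤ √2 := by
  refine Real.sqrt_le_sqrt ?_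
  calc ∑ a, (p - q) a ^ 2 ≤ ∑ a, (p a + q a) := by
        refine sum_le_sum fun a _ ↦ ?_
        obtain ⟨hp0, hp1⟩ := mem_Icc_of_mem_stdSimplex (𝕜 := ℝ) hp a
        obtain ⟨hq0, hq1⟩ := mem_Icc_of_mem_stdSimplex (𝕜 := ℝ) hq a
        simp only [Pi.sub_apply]
        nlinarith
    _ = 2 := by rw [sum_add_distrib, hp.2, hq.2]; norm_num

namespace IsProjSimplex

lemma dotProduct_sub_nonpos (h : IsProjSimplex x y) (hz : IsProbVec z) :
    (x - y) ⬝ᵥ (z - y) ≤ 0 := by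
  let K : Set (EuclideanSpace ℝ X) := {w | IsProbVec w.ofLp}
  have hK : Convex ℝ K :=
    (convex_stdSimplex ℝ X).linear_preimage (WithLp.linearEquiv 2 ℝ (X → ℝ)).toLinearMap
  have hyK : WithLp.toLp 2 y ∈ K := h.1
  have hmin : ‖WithLp.toLp 2 x - WithLp.toLp 2 y‖ = ⨅ w : K, ‖WithLp.toLp 2 x - w‖ := by
    have : Nonempty K := ⟨⟨_, hyK⟩⟩
    refine le_antisymm (le_ciInf fun w ↦ ?_)
      (ciInf_le ⟨0, Set.forall_mem_range.2 fun _ ↦ norm_nonneg _⟩ (⟨_, hyK⟩ : K))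
    rw [norm_sub_rev, norm_sub_rev _ w.1]
    have hle := h.2 _ w.2
    rwa [l2norm_eq_norm_toLp, l2norm_eq_norm_toLp] at hle
  have hinner := (norm_eq_iInf_iff_real_inner_le_zero hK hyK).1 hmin (WithLp.toLp 2 z) hz
  rw [← WithLp.toLp_sub, ← WithLp.toLp_sub, EuclideanSpace.inner_toLp_toLp] at hinner
  rwa [dotProduct_comm]

lemma sq_l2norm_sub_le (h : IsProjSimplex (p + η • q) y) (hp : IsProbVec p) :
    l2norm (y - p) ^ 2 ≤ η * (q ⬝ᵥ (y - p)) := by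
  have hvar := h.dotProduct_sub_nonpos hp
  rw [sq_l2norm]
  simp only [sub_dotProduct, add_dotProduct, smul_dotProduct, dotProduct_sub, smul_eq_mul] at *
  linarith

lemma l2norm_sub_le (h : IsProjSimplex (p + η • q) y) (hp : IsProbVec p) (hη : 0 ≤ η) :
    l2norm (y - p) ≤ η * l2norm q := by
  rcases (l2norm_nonneg (y - p)).eq_or_lt with h0 | hpos
  · rw [← h0]
    exact mul_nonneg hη (l2norm_nonneg q)
  · refine le_of_mul_le_mul_right ?_ hpos
    calc l2norm (y - p) * l2norm (y - p) = l2norm (y - p) ^ 2 := (sq _).symm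
      _ ≤ η * (q ⬝ᵥ (y - p)) := h.sq_l2norm_sub_le hp
      _ ≤ η * (l2norm q * l2norm (y - p)) := by
        gcongr
        exact dotProduct_le_l2norm_mul_l2norm q (y - p)
      _ = η * l2norm q * l2norm (y - p) := (mul_assoc _ _ _).symm

lemma sum_abs_sub_le (h : IsProjSimplex (p + η • q) y) (hp : IsProbVec p) (hη : 0 ≤ η)
    (hb : 0 ≤ b) (hq : ∀ a, |q a| ≤ b) : ∑ a, |(y - p) a| ≤ η * Fintype.card X * b := by
  calc ∑ a, |(y - p) a| ≤ √(Fintype.card X) * l2norm (y - p) :=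
        sum_abs_le_sqrt_card_mul_l2norm _
    _ ≤ √(Fintype.card X) * (η * (√(Fintype.card X) * b)) := by
        gcongr
        exact (h.l2norm_sub_le hp hη).trans (by gcongr; exact l2norm_le_sqrt_card_mul hb hq)
    _ = η * √(Fintype.card X) ^ 2 * b := by ring
    _ = η * Fintype.card X * b := by rw [Real.sq_sqrt (Nat.cast_nonneg _)]

lemma dotProduct_sub_le (h : IsProjSimplex (p + η • q) y) (hη : 0 ≤ η) (hz : IsProbVec z) :
    η * (q ⬝ᵥ (z - p)) ≤ (√2 + η * l2norm q) * l2norm (y - p) := by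
  have hvar := h.dotProduct_sub_nonpos hz
  have hsplit : η * (q ⬝ᵥ (z - p)) =
      (p + η • q - y) ⬝ᵥ (z - y) + (y - p) ⬝ᵥ (z - y) + η * (q ⬝ᵥ (y - p)) := by
    simp only [sub_dotProduct, add_dotProduct, smul_dotProduct, dotProduct_sub, smul_eq_mul]
    ring
  have hzy : (y - p) ⬝ᵥ (z - y) ≤ √2 * l2norm (y - p) := by
    calc (y - p) ⬝ᵥ (z - y) ≤ l2norm (y - p) * l2norm (z - y) :=
          dotProduct_le_l2norm_mul_l2norm _ _
      _ ≤ l2norm (y - p) * √2 := by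
          gcongr
          · exact l2norm_nonneg _
          · exact hz.l2norm_sub_le h.1
      _ = √2 * l2norm (y - p) := mul_comm _ _
  have hqy : η * (q ⬝ᵥ (y - p)) ≤ η * l2norm q * l2norm (y - p) := by
    rw [mul_assoc]
    exact mul_le_mul_of_nonneg_left (dotProduct_le_l2norm_mul_l2norm _ _) hη
  linarith

end IsProjSimplex

end Simplex

section DiscountedOccupation

open Matrix

variable {S : Type*} [Fintype S] [DecidableEq S] {M : Matrix S S ℝ} {μ g W : S → ℝ} {b δ : ℝ}

lemma IsProbVec.vecMul (hμ : IsProbVec μ) (hM : M ∈ rowStochastic ℝ S) : IsProbVec (μ ᵥ* M) := by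
  refine ⟨nonneg_vecMul_of_mem_rowStochastic hM hμ.1, ?_⟩
  rw [← dotProduct_one, ← dotProduct_mulVec, one_vecMul_of_mem_rowStochastic hM, dotProduct_one,
    hμ.2]

/-- The normalised discounted occupation measure of the Markov chain with transition matrix `M`
started from `μ`. The visitation distribution `dvisit` of a policy profile is the case where `M` is
the induced transition matrix. -/
noncomputable def discountedOccupation (δ : ℝ) (M : Matrix S S ℝ) (μ : S → ℝ) (s : S) : ℝ :=
  (1 - δ) * ∑' k : ℕ, δ ^ k * (μ ᵥ* M ^ k) s

lemma summable_pow_mul_vecMul_pow (hδ0 : 0 ≤ δ) (hδ1 : δ < 1) (hM : M ∈ rowStochastic ℝ S)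
    (hμ : IsProbVec μ) (s : S) : Summable fun k : ℕ ↦ δ ^ k * (μ ᵥ* M ^ k) s := by
  have hprob (k : ℕ) : IsProbVec (μ ᵥ* M ^ k) := hμ.vecMul (pow_mem hM k)
  refine (summable_geometric_of_lt_one hδ0 hδ1).of_nonneg_of_le
    (fun k ↦ mul_nonneg (pow_nonneg hδ0 k) ((hprob k).1 s)) fun k ↦ ?_
  exact mul_le_of_le_one_right (pow_nonneg hδ0 k) (mem_Icc_of_mem_stdSimplex (hprob k) s).2

lemma discountedOccupation_nonneg (hδ0 : 0 ≤ δ) (hδ1 : δ < 1) (hM : M ∈ rowStochastic ℝ S)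
    (hμ : IsProbVec μ) : 0 ≤ discountedOccupation δ M μ := fun s ↦
  mul_nonneg (sub_nonneg.2 hδ1.le) <| tsum_nonneg fun k ↦
    mul_nonneg (pow_nonneg hδ0 k) ((hμ.vecMul (pow_mem hM k)).1 s)

lemma discountedOccupation_eq (hδ0 : 0 ≤ δ) (hδ1 : δ < 1) (hM : M ∈ rowStochastic ℝ S)
    (hμ : IsProbVec μ) :
    discountedOccupation δ M μ = (1 - δ) • μ + δ • (discountedOccupation δ M μ ᵥ* M) := by
  have hsum := summable_pow_mul_vecMul_pow hδ0 hδ1 hM hμ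
  ext s
  have htail : HasSum (fun k : ℕ ↦ δ ^ (k + 1) * (μ ᵥ* M ^ (k + 1)) s)
      (∑ s', δ * ((∑' k : ℕ, δ ^ k * (μ ᵥ* M ^ k) s') * M s' s)) := by
    refine (hasSum_sum fun s' _ ↦ ((hsum s').hasSum.mul_right (M s' s)).mul_left δ).congr_fun ?_
    intro k
    rw [pow_succ M, ← vecMul_vecMul, vecMul_apply_eq_sum, mul_sum]
    exact sum_congr rfl fun s' _ ↦ by ring
  rw [discountedOccupation, (hsum s).tsum_eq_zero_add, htail.tsum_eq, pow_zero, pow_zero, one_mul,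
    vecMul_one]
  simp only [discountedOccupation, Pi.add_apply, Pi.smul_apply, smul_eq_mul,
    vecMul_apply_eq_sum, mul_add, mul_sum]
  congr 1
  exact sum_congr rfl fun s' _ ↦ by ring

lemma discountedOccupation_dotProduct (hδ0 : 0 ≤ δ) (hδ1 : δ < 1) (hM : M ∈ rowStochastic ℝ S)
    (hμ : IsProbVec μ) (hW : W = g + δ • (M *ᵥ W)) :
    discountedOccupation δ M μ ⬝ᵥ g = (1 - δ) * (μ ⬝ᵥ W) := by
  set d := discountedOccupation δ M μ with hd
  have hdW : d ⬝ᵥ W = (1 - δ) * (μ ⬝ᵥ W) + δ * (d ᵥ* M ⬝ᵥ W) := by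
    conv_lhs => rw [hd, discountedOccupation_eq hδ0 hδ1 hM hμ]
    rw [add_dotProduct, smul_dotProduct, smul_dotProduct, smul_eq_mul, smul_eq_mul]
  have hdg : d ⬝ᵥ W = d ⬝ᵥ g + δ * (d ᵥ* M ⬝ᵥ W) := by
    conv_lhs => rw [hW]
    rw [dotProduct_add, dotProduct_smul, dotProduct_mulVec, smul_eq_mul]
  linarith

lemma isProbVec_discountedOccupation (hδ0 : 0 ≤ δ) (hδ1 : δ < 1) (hM : M ∈ rowStochastic ℝ S)
    (hμ : IsProbVec μ) : IsProbVec (discountedOccupation δ M μ) := by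
  refine ⟨discountedOccupation_nonneg hδ0 hδ1 hM hμ, ?_⟩
  have hone : (1 : S → ℝ) = (1 - δ) • 1 + δ • (M *ᵥ 1) := by
    rw [one_vecMul_of_mem_rowStochastic hM, ← add_smul, sub_add_cancel, one_smul]
  have hmass := discountedOccupation_dotProduct hδ0 hδ1 hM hμ hone
  rw [dotProduct_smul, dotProduct_one, dotProduct_one, hμ.2, smul_eq_mul] at hmass
  exact mul_left_cancel₀ (sub_ne_zero.2 hδ1.ne') hmass

lemma mul_le_discountedOccupation (hδ0 : 0 ≤ δ) (hδ1 : δ < 1) (hM : M ∈ rowStochastic ℝ S)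
    (hμ : IsProbVec μ) : (1 - δ) • μ ≤ discountedOccupation δ M μ := by
  rw [discountedOccupation_eq hδ0 hδ1 hM hμ, le_add_iff_nonneg_right]
  exact smul_nonneg hδ0 (nonneg_vecMul_of_mem_rowStochastic hM
    (discountedOccupation_nonneg hδ0 hδ1 hM hμ))

lemma abs_le_div_of_eq_add_smul_mulVec (hδ0 : 0 ≤ δ) (hδ1 : δ < 1) (hM : M ∈ rowStochastic ℝ S)
    (hW : W = g + δ • (M *ᵥ W)) (hg : ∀ s, |g s| ≤ b) (s : S) : |W s| ≤ b / (1 - δ) := by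
  have hs : IsProbVec (Pi.single s 1 : S → ℝ) := single_mem_stdSimplex ℝ s
  have hWs := discountedOccupation_dotProduct hδ0 hδ1 hM hs hW
  rw [single_one_dotProduct] at hWs
  rw [le_div_iff₀' (sub_pos.2 hδ1), ← abs_of_pos (sub_pos.2 hδ1), ← abs_mul, ← hWs]
  exact (isProbVec_discountedOccupation hδ0 hδ1 hM hs).abs_dotProduct_le hg

end DiscountedOccupation

section ProductDistribution

variable {I : Type*} [Fintype I] [DecidableEq I] {A : I → Type*} {p q r : ∀ i, A i → ℝ}

lemma prod_update_apply (r : ∀ i, A i → ℝ) (k : I) (f : A k → ℝ) (a : ∀ i, A i) :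
    ∏ i, Function.update r k f i (a i) = f (a k) * ∏ i ∈ univ.erase k, r i (a i) := by
  rw [← mul_prod_erase univ _ (mem_univ k), Function.update_self]
  congr 1
  exact prod_congr rfl fun i hi ↦ by rw [Function.update_of_ne (ne_of_mem_erase hi)]

variable [∀ i, Fintype (A i)]

lemma sum_prod_apply (r : ∀ i, A i → ℝ) :
    ∑ a : ∀ i, A i, ∏ i, r i (a i) = ∏ i, ∑ x, r i x := by
  rw [prod_univ_sum, Fintype.piFinset_univ]

lemma isProbVec_prod (hp : ∀ i, IsProbVec (p i)) :
    IsProbVec fun a : ∀ i, A i ↦ ∏ i, p i (a i) := by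
  refine ⟨fun a ↦ prod_nonneg fun i _ ↦ (hp i).1 (a i), ?_⟩
  rw [sum_prod_apply]
  exact prod_eq_one fun i _ ↦ (hp i).2

lemma sum_abs_prod_update_sub (hr : ∀ i, IsProbVec (r i)) (k : I) (f : A k → ℝ) :
    ∑ a : ∀ i, A i, |∏ i, Function.update r k f i (a i) - ∏ i, r i (a i)| =
      ∑ x, |f x - r k x| := by
  have hdiff (a : ∀ i, A i) : |∏ i, Function.update r k f i (a i) - ∏ i, r i (a i)| =
      ∏ i, Function.update r k (fun x ↦ |f x - r k x|) i (a i) := by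
    rw [prod_update_apply, prod_update_apply,
      ← mul_prod_erase univ (fun i ↦ r i (a i)) (mem_univ k), ← sub_mul, abs_mul,
      abs_of_nonneg (prod_nonneg fun i _ ↦ (hr i).1 (a i))]
  simp_rw [hdiff]
  rw [sum_prod_apply, prod_eq_single_of_mem k (mem_univ k), Function.update_self]
  intro i _ hi
  rw [Function.update_of_ne hi, (hr i).2]

lemma sum_abs_prod_sub_prod_le (hp : ∀ i, IsProbVec (p i)) (hq : ∀ i, IsProbVec (q i)) :
    ∑ a : ∀ i, A i, |∏ i, p i (a i) - ∏ i, q i (a i)| ≤ ∑ i, ∑ x, |p i x - q i x| := by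
  suffices hJ : ∀ J : Finset I, ∑ a : ∀ i, A i, |∏ i, J.piecewise p q i (a i) - ∏ i, q i (a i)| ≤
      ∑ i ∈ J, ∑ x, |p i x - q i x| by
    simpa only [piecewise_univ] using hJ univ
  intro J
  induction J using Finset.induction with
  | empty => simp
  | insert k J hk ih =>
    have hr (i : I) : IsProbVec (J.piecewise p q i) := J.piecewise_cases p q IsProbVec (hp i) (hq i)
    rw [piecewise_insert, sum_insert hk, ← J.piecewise_eq_of_notMem p q hk,
      ← sum_abs_prod_update_sub hr k (p k)]
    refine le_trans ?_ (add_le_add_right ih _)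
    rw [← sum_add_distrib]
    exact sum_le_sum fun a _ ↦ abs_sub_le _ _ _

end ProductDistribution

section MarkovGame

open Matrix

variable {S I : Type*} {A : I → Type*} {δ b ε : ℝ} {P : S → (∀ i, A i) → S → ℝ}
  {u : S → (∀ i, A i) → ℝ} {π σ : ∀ i, S → A i → ℝ} {V W μ : S → ℝ} {i : I}

section Lookahead

variable [Fintype S]

/-- The payoff of the joint action `a` at state `s` when play continues with value `V`; a policy
profile averages it to the right-hand side of the Bellman equation, and `Qfun` averages it over the
opponents. -/
def lookahead (δ : ℝ) (P : S → (∀ i, A i) → S → ℝ) (u : S → (∀ i, A i) → ℝ) (V : S → ℝ) (s : S)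
    (a : ∀ i, A i) : ℝ :=
  u s a + δ * (P s a ⬝ᵥ V)

lemma lookahead_sub_lookahead (W V : S → ℝ) (s : S) (a : ∀ i, A i) :
    (lookahead δ P u W s - lookahead δ P u V s) a = δ * (P s a ⬝ᵥ (W - V)) := by
  simp only [lookahead, Pi.sub_apply, dotProduct_sub]
  ring

lemma abs_lookahead_le (hδ0 : 0 ≤ δ) (hδ1 : δ < 1) (hP : IsKernel P) (hu : ∀ s a, |u s a| ≤ b)
    (hV : ∀ s, |V s| ≤ b / (1 - δ)) (s : S) (a : ∀ i, A i) :
    |lookahead δ P u V s a| ≤ b / (1 - δ) := by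
  have hg : 1 - δ ≠ 0 := (sub_pos.2 hδ1).ne'
  calc |lookahead δ P u V s a| ≤ |u s a| + |δ * (P s a ⬝ᵥ V)| := abs_add_le _ _
    _ ≤ b + δ * (b / (1 - δ)) := by
        rw [abs_mul, abs_of_nonneg hδ0]
        gcongr
        · exact hu s a
        · exact (hP s a).abs_dotProduct_le hV
    _ = b / (1 - δ) := by field_simp; ring

end Lookahead

variable [Fintype I] [DecidableEq I] [∀ i, Fintype (A i)]

namespace IsPolicy

lemma update (hπ : IsPolicy π) {p : S → A i → ℝ} (hp : ∀ s, IsProbVec (p s)) :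
    IsPolicy (Function.update π i p) := by
  intro j s
  rcases eq_or_ne j i with rfl | hji
  · rw [Function.update_self]
    exact hp s
  · rw [Function.update_of_ne hji]
    exact hπ j s

lemma piecewise (hσ : IsPolicy σ) (hπ : IsPolicy π) (J : Finset I) :
    IsPolicy (J.piecewise σ π) := fun i s ↦
  J.piecewise_cases σ π (fun p ↦ IsProbVec (p s)) (hσ i s) (hπ i s)

lemma isProbVec_jointDist (hπ : IsPolicy π) (s : S) : IsProbVec (jointDist π s) :=
  isProbVec_prod fun i ↦ hπ i s

lemma sum_abs_jointDist_sub_le (hσ : IsPolicy σ) (hπ : IsPolicy π) (s : S) :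
    ∑ a, |(jointDist σ s - jointDist π s) a| ≤ ∑ i, ∑ x, |(σ i s - π i s) x| :=
  sum_abs_prod_sub_prod_le (fun i ↦ hσ i s) fun i ↦ hπ i s

lemma transMat_mem_rowStochastic [Fintype S] [DecidableEq S] (hπ : IsPolicy π)
    (hP : IsKernel P) : of (transMat P π) ∈ rowStochastic ℝ S := by
  rw [mem_rowStochastic_iff_sum]
  refine ⟨fun s s' ↦ (hπ.isProbVec_jointDist s).dotProduct_nonneg fun a ↦ (hP s a).1 s',
    fun s ↦ ?_⟩
  simp only [of_apply, transMat]
  rw [sum_comm]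
  simp only [← mul_sum, (hP s _).2, mul_one, (hπ.isProbVec_jointDist s).2]

end IsPolicy

lemma sum_abs_update_sub_update_le (p : S → A i → ℝ) (s : S) :
    ∑ j, ∑ x, |(Function.update σ i p j s - Function.update π i p j s) x| ≤
      ∑ j, ∑ x, |(σ j s - π j s) x| := by
  refine sum_le_sum fun j _ ↦ ?_
  rcases eq_or_ne j i with rfl | hji
  · simp only [Function.update_self, sub_self, Pi.zero_apply, abs_zero, sum_const_zero]
    positivity
  · simp only [Function.update_of_ne hji, le_refl]

lemma sum_abs_piecewise_sub_le {J : Finset I} {s : S}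
    (hmove : ∀ i, ∑ x, |(σ i s - π i s) x| ≤ ε) :
    ∑ i, ∑ x, |(J.piecewise σ π i s - π i s) x| ≤ Fintype.card I * ε := by
  have hbound (i : I) : ∑ x, |(J.piecewise σ π i s - π i s) x| ≤ ε := by
    by_cases hi : i ∈ J
    · simpa only [piecewise_eq_of_mem _ _ _ hi] using hmove i
    · have hε : 0 ≤ ε := le_trans (by positivity) (hmove i)
      simpa only [piecewise_eq_of_notMem _ _ _ hi, sub_self, Pi.zero_apply, abs_zero,
        sum_const_zero] using hε
  simpa using sum_le_card_nsmul univ _ ε fun i _ ↦ hbound i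

variable [Fintype S]

lemma jointDist_dotProduct_lookahead (π : ∀ i, S → A i → ℝ) (V : S → ℝ) (s : S) :
    jointDist π s ⬝ᵥ lookahead δ P u V s =
      expPay u π s + δ * (of (transMat P π) *ᵥ V) s := by
  have htrans : (of (transMat P π) *ᵥ V) s = jointDist π s ⬝ᵥ fun a ↦ P s a ⬝ᵥ V := by
    simp only [mulVec, dotProduct, of_apply, transMat, sum_mul, mul_sum, mul_assoc]
    exact sum_comm
  rw [htrans, ← smul_eq_mul, ← dotProduct_smul]
  exact dotProduct_add _ _ _

lemma IsValueFun.eq_dotProduct (hV : IsValueFun δ P u π V) (s : S) :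
    V s = jointDist π s ⬝ᵥ lookahead δ P u V s :=
  (hV s).trans (jointDist_dotProduct_lookahead π V s).symm

lemma IsValueFun.sub_eq (hW : IsValueFun δ P u σ W) (hV : IsValueFun δ P u π V) :
    W - V = (fun s ↦ (jointDist σ s - jointDist π s) ⬝ᵥ lookahead δ P u V s) +
      δ • (of (transMat P σ) *ᵥ (W - V)) := by
  ext s
  have hWs : W s = expPay u σ s + δ * (of (transMat P σ) *ᵥ W) s := hW s
  have hVs := hV.eq_dotProduct s
  have hσV := jointDist_dotProduct_lookahead (δ := δ) (P := P) (u := u) σ V s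
  simp only [Pi.sub_apply, Pi.add_apply, Pi.smul_apply, smul_eq_mul, sub_dotProduct, mulVec_sub]
  linarith

lemma jointDist_update_dotProduct_lookahead [∀ i, DecidableEq (A i)] (π : ∀ i, S → A i → ℝ)
    (p : S → A i → ℝ) (V : S → ℝ) (s : S) :
    jointDist (Function.update π i p) s ⬝ᵥ lookahead δ P u V s =
      p s ⬝ᵥ Qfun δ P u π V i s := by
  have hupdate (a : ∀ j, A j) : jointDist (Function.update π i p) s a =
      p s (a i) * ∏ j ∈ univ.erase i, π j s (a j) := by
    rw [jointDist, ← prod_update_apply (fun j ↦ π j s) i (p s) a]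
    exact prod_congr rfl fun j _ ↦
      congrFun (Function.apply_update (fun _ q ↦ q s) π i p j) (a j)
  simp only [dotProduct, hupdate, Qfun]
  simp only [mul_sum (s := univ (α := ∀ j, A j)), mul_ite, mul_zero]
  rw [sum_comm]
  refine sum_congr rfl fun a _ ↦ ?_
  rw [sum_ite_eq, if_pos (mem_univ _), mul_assoc]
  rfl

lemma Qfun_eq_jointDist_dotProduct [∀ i, DecidableEq (A i)] (π : ∀ i, S → A i → ℝ) (V : S → ℝ)
    (s : S) (x : A i) :
    Qfun δ P u π V i s x =
      jointDist (Function.update π i fun _ ↦ Pi.single x 1) s ⬝ᵥ lookahead δ P u V s := by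
  rw [jointDist_update_dotProduct_lookahead, single_one_dotProduct]

lemma IsValueFun.abs_le (hδ0 : 0 ≤ δ) (hδ1 : δ < 1) (hP : IsKernel P) (hu : ∀ s a, |u s a| ≤ b)
    (hπ : IsPolicy π) (hV : IsValueFun δ P u π V) (s : S) : |V s| ≤ b / (1 - δ) := by
  classical
  exact abs_le_div_of_eq_add_smul_mulVec hδ0 hδ1 (hπ.transMat_mem_rowStochastic hP) (funext hV)
    (fun s ↦ (hπ.isProbVec_jointDist s).abs_dotProduct_le (hu s)) s

lemma IsValueFun.dotProduct_sub_le (hδ0 : 0 ≤ δ) (hδ1 : δ < 1) (hP : IsKernel P)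
    (hu : ∀ s a, |u s a| ≤ b) (hσ : IsPolicy σ) (hπ : IsPolicy π) (hW : IsValueFun δ P u σ W)
    (hV : IsValueFun δ P u π V) (hμ : IsProbVec μ) :
    μ ⬝ᵥ W - μ ⬝ᵥ V ≤ 2 * b / (1 - δ) := by
  have hWμ := hμ.abs_dotProduct_le (hW.abs_le hδ0 hδ1 hP hu hσ)
  have hVμ := hμ.abs_dotProduct_le (hV.abs_le hδ0 hδ1 hP hu hπ)
  linarith [le_abs_self (μ ⬝ᵥ W), neg_abs_le (μ ⬝ᵥ V), mul_div_assoc 2 b (1 - δ)]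

lemma abs_Qfun_le [∀ i, DecidableEq (A i)] (hδ0 : 0 ≤ δ) (hδ1 : δ < 1) (hP : IsKernel P)
    (hu : ∀ s a, |u s a| ≤ b) (hπ : IsPolicy π) (hV : IsValueFun δ P u π V) (i : I) (s : S)
    (x : A i) : |Qfun δ P u π V i s x| ≤ b / (1 - δ) := by
  rw [Qfun_eq_jointDist_dotProduct]
  have hpure : IsPolicy (Function.update π i fun _ ↦ Pi.single x 1) :=
    hπ.update fun _ ↦ single_mem_stdSimplex ℝ x
  exact (hpure.isProbVec_jointDist s).abs_dotProduct_le
    (abs_lookahead_le hδ0 hδ1 hP hu (hV.abs_le hδ0 hδ1 hP hu hπ) s)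

lemma abs_jointDist_sub_dotProduct_lookahead_le (hδ0 : 0 ≤ δ) (hδ1 : δ < 1) (hP : IsKernel P)
    (hu : ∀ s a, |u s a| ≤ b) (hb : 0 ≤ b) (hσ : IsPolicy σ) (hπ : IsPolicy π)
    (hV : ∀ s, |V s| ≤ b / (1 - δ)) {s : S} (hε : ∑ i, ∑ x, |(σ i s - π i s) x| ≤ ε) :
    |(jointDist σ s - jointDist π s) ⬝ᵥ lookahead δ P u V s| ≤ ε * (b / (1 - δ)) := by
  refine (abs_dotProduct_le _ (abs_lookahead_le hδ0 hδ1 hP hu hV s)).trans ?_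
  exact mul_le_mul_of_nonneg_right ((hσ.sum_abs_jointDist_sub_le hπ s).trans hε)
    (div_nonneg hb (sub_pos.2 hδ1).le)

lemma IsValueFun.abs_sub_le (hδ0 : 0 ≤ δ) (hδ1 : δ < 1) (hP : IsKernel P)
    (hu : ∀ s a, |u s a| ≤ b) (hb : 0 ≤ b) (hσ : IsPolicy σ) (hπ : IsPolicy π)
    (hW : IsValueFun δ P u σ W) (hV : IsValueFun δ P u π V)
    (hε : ∀ s, ∑ i, ∑ x, |(σ i s - π i s) x| ≤ ε) (s : S) :
    |(W - V) s| ≤ ε * (b / (1 - δ)) / (1 - δ) := by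
  classical
  exact abs_le_div_of_eq_add_smul_mulVec hδ0 hδ1 (hσ.transMat_mem_rowStochastic hP)
    (hW.sub_eq hV) (fun s ↦ abs_jointDist_sub_dotProduct_lookahead_le hδ0 hδ1 hP hu hb hσ hπ
      (hV.abs_le hδ0 hδ1 hP hu hπ) (hε s)) s

lemma abs_Qfun_sub_le [∀ i, DecidableEq (A i)] (hδ0 : 0 ≤ δ) (hδ1 : δ < 1) (hP : IsKernel P)
    (hu : ∀ s a, |u s a| ≤ b) (hb : 0 ≤ b) (hσ : IsPolicy σ) (hπ : IsPolicy π)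
    (hW : IsValueFun δ P u σ W) (hV : IsValueFun δ P u π V)
    (hε : ∀ s, ∑ i, ∑ x, |(σ i s - π i s) x| ≤ ε) (i : I) (s : S) (x : A i) :
    |(Qfun δ P u σ W i s - Qfun δ P u π V i s) x| ≤ ε * (b / (1 - δ)) / (1 - δ) := by
  have hg : 1 - δ ≠ 0 := (sub_pos.2 hδ1).ne'
  have hpure (_ : S) : IsProbVec (Pi.single x 1 : A i → ℝ) := single_mem_stdSimplex ℝ x
  set σ' := Function.update σ i fun _ ↦ Pi.single x 1
  set π' := Function.update π i fun _ ↦ Pi.single x 1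
  have hσ' : IsPolicy σ' := hσ.update hpure
  have hprofile : |(jointDist σ' s - jointDist π' s) ⬝ᵥ lookahead δ P u V s| ≤
      ε * (b / (1 - δ)) :=
    abs_jointDist_sub_dotProduct_lookahead_le hδ0 hδ1 hP hu hb hσ' (hπ.update hpure)
      (hV.abs_le hδ0 hδ1 hP hu hπ) ((sum_abs_update_sub_update_le _ s).trans (hε s))
  have hvalue : |jointDist σ' s ⬝ᵥ (lookahead δ P u W s - lookahead δ P u V s)| ≤
      δ * (ε * (b / (1 - δ)) / (1 - δ)) := by
    refine (hσ'.isProbVec_jointDist s).abs_dotProduct_le fun a ↦ ?_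
    rw [lookahead_sub_lookahead, abs_mul, abs_of_nonneg hδ0]
    gcongr
    exact (hP s a).abs_dotProduct_le (hW.abs_sub_le hδ0 hδ1 hP hu hb hσ hπ hV hε)
  have hsplit : (Qfun δ P u σ W i s - Qfun δ P u π V i s) x =
      (jointDist σ' s - jointDist π' s) ⬝ᵥ lookahead δ P u V s +
        jointDist σ' s ⬝ᵥ (lookahead δ P u W s - lookahead δ P u V s) := by
    rw [Pi.sub_apply, Qfun_eq_jointDist_dotProduct, Qfun_eq_jointDist_dotProduct,
      sub_dotProduct, dotProduct_sub]
    ring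
  calc |(Qfun δ P u σ W i s - Qfun δ P u π V i s) x|
      ≤ ε * (b / (1 - δ)) + δ * (ε * (b / (1 - δ)) / (1 - δ)) := by
        rw [hsplit]
        exact (abs_add_le _ _).trans (add_le_add hprofile hvalue)
    _ = ε * (b / (1 - δ)) / (1 - δ) := by field_simp; ring

variable [DecidableEq S]

lemma dvisit_dotProduct_Qfun [∀ i, DecidableEq (A i)] (hδ0 : 0 ≤ δ) (hδ1 : δ < 1)
    (hP : IsKernel P) (hπ : IsPolicy π) {p : S → A i → ℝ} (hp : ∀ s, IsProbVec (p s))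
    (hV : IsValueFun δ P u π V) (hW : IsValueFun δ P u (Function.update π i p) W)
    (hμ : IsProbVec μ) :
    (dvisit δ P (Function.update π i p) μ ⬝ᵥ fun s ↦ Qfun δ P u π V i s ⬝ᵥ (p s - π i s)) =
      (1 - δ) * (μ ⬝ᵥ W - μ ⬝ᵥ V) := by
  have hadvantage (s : S) : Qfun δ P u π V i s ⬝ᵥ (p s - π i s) =
      (jointDist (Function.update π i p) s - jointDist π s) ⬝ᵥ lookahead δ P u V s := by
    have hself := jointDist_update_dotProduct_lookahead (δ := δ) (P := P) (u := u) π (π i) V s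
    rw [Function.update_eq_self] at hself
    rw [sub_dotProduct, jointDist_update_dotProduct_lookahead, hself, ← sub_dotProduct,
      dotProduct_comm]
  simp only [hadvantage]
  rw [← dotProduct_sub]
  exact discountedOccupation_dotProduct hδ0 hδ1
    ((hπ.update hp).transMat_mem_rowStochastic hP) hμ (hW.sub_eq hV)

end MarkovGame

section ProjectedAscent

variable {S I : Type*} {A : I → Type*} [Fintype I] [DecidableEq I] [∀ i, Fintype (A i)]

/-- `Φ` is an `α`-potential for the value functions `V`: a unilateral deviation changes `Φ` and the
deviator's value by the same amount, up to `α`. -/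
def IsAlphaPotential (α : ℝ) (V : I → (∀ i, S → A i → ℝ) → S → ℝ)
    (Φ : (∀ i, S → A i → ℝ) → S → ℝ) : Prop :=
  ∀ (s : S) (i : I) (π : ∀ i, S → A i → ℝ), IsPolicy π →
    ∀ p : S → A i → ℝ, (∀ s', IsProbVec (p s')) →
      |(Φ (Function.update π i p) s - Φ π s) - (V i (Function.update π i p) s - V i π s)| ≤ α

lemma IsAlphaPotential.nonneg {α : ℝ} {V : I → (∀ i, S → A i → ℝ) → S → ℝ}
    {Φ : (∀ i, S → A i → ℝ) → S → ℝ} {π : ∀ i, S → A i → ℝ} (hΦ : IsAlphaPotential α V Φ)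
    (hπ : IsPolicy π) (s : S) (i : I) : 0 ≤ α :=
  (abs_nonneg _).trans (hΦ s i π hπ (π i) (hπ i))

variable [Fintype S]

lemma IsAlphaPotential.value_sub_le {α : ℝ} {V : I → (∀ i, S → A i → ℝ) → S → ℝ}
    {Φ : (∀ i, S → A i → ℝ) → S → ℝ} {π : ∀ i, S → A i → ℝ} {ν : S → ℝ}
    (hΦ : IsAlphaPotential α V Φ) (hπ : IsPolicy π) {i : I}
    {p : S → A i → ℝ} (hp : ∀ s, IsProbVec (p s)) (hν : IsProbVec ν) :
    ν ⬝ᵥ V i (Function.update π i p) - ν ⬝ᵥ V i π ≤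
      ν ⬝ᵥ Φ (Function.update π i p) - ν ⬝ᵥ Φ π + α := by
  have hdiff := hν.abs_dotProduct_le fun s ↦ hΦ s i π hπ p hp
  have hsplit : (ν ⬝ᵥ fun s ↦ (Φ (Function.update π i p) s - Φ π s) -
      (V i (Function.update π i p) s - V i π s)) =
      (ν ⬝ᵥ Φ (Function.update π i p) - ν ⬝ᵥ Φ π) -
        (ν ⬝ᵥ V i (Function.update π i p) - ν ⬝ᵥ V i π) := by
    simp only [← dotProduct_sub]
    rfl
  rw [hsplit] at hdiff
  linarith [(abs_le.1 hdiff).1]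

/-- The `ν`-average over states of the squared Euclidean distance between two policies of one
player; it measures the progress of an ascent step. -/
noncomputable def weightedSqDist {X : Type*} [Fintype X] (ν : S → ℝ) (p q : S → X → ℝ) : ℝ :=
  ν ⬝ᵥ fun s ↦ l2norm (p s - q s) ^ 2

lemma weightedSqDist_nonneg {X : Type*} [Fintype X] {ν : S → ℝ} (hν : IsProbVec ν)
    (p q : S → X → ℝ) : 0 ≤ weightedSqDist ν p q :=
  hν.dotProduct_nonneg fun _ ↦ sq_nonneg _

variable [∀ i, DecidableEq (A i)]

/-- `π'` is obtained from `π` by one simultaneous projected gradient-ascent step of size `η`, every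
player following their own Q-function. -/
def IsProjAscentStep (δ : ℝ) (P : S → (∀ i, A i) → S → ℝ) (u : I → S → (∀ i, A i) → ℝ)
    (V : I → (∀ i, S → A i → ℝ) → S → ℝ) (η : ℝ) (π π' : ∀ i, S → A i → ℝ) : Prop :=
  ∀ i s, IsProjSimplex (π i s + η • Qfun δ P (u i) π (V i π) i s) (π' i s)

variable {δ η ε α κ : ℝ} {P : S → (∀ i, A i) → S → ℝ} {π π' σ : ∀ i, S → A i → ℝ} {μ ν : S → ℝ}

section SinglePlayer

variable {u : S → (∀ i, A i) → ℝ} {i : I} {p : S → A i → ℝ} {V W W' : S → ℝ} {E : ℝ}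

lemma sq_l2norm_sub_le_mul_Qfun_dotProduct (hδ0 : 0 ≤ δ) (hδ1 : δ < 1) (hP : IsKernel P)
    (hu : ∀ s a, |u s a| ≤ 1) (hπ : IsPolicy π) (hσ : IsPolicy σ) (hσi : σ i = π i)
    (hV : IsValueFun δ P u π V) (hW : IsValueFun δ P u σ W) (hη : 0 ≤ η) {s : S}
    (hp : IsProjSimplex (π i s + η • Qfun δ P u π V i s) (p s))
    (hmove : ∑ x, |(p s - π i s) x| ≤ ε)
    (hdist : ∀ s, ∑ j, ∑ x, |(σ j s - π j s) x| ≤ E) :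
    l2norm (p s - π i s) ^ 2 ≤
      η * (Qfun δ P u σ W i s ⬝ᵥ (p s - σ i s) + E * ε / (1 - δ) ^ 2) := by
  have hg := sub_pos.2 hδ1
  have hE : 0 ≤ E := le_trans (by positivity) (hdist s)
  have hdrift : |(p s - π i s) ⬝ᵥ (Qfun δ P u σ W i s - Qfun δ P u π V i s)| ≤
      E * ε / (1 - δ) ^ 2 :=
    calc _ ≤ (∑ x, |(p s - π i s) x|) * (E * (1 / (1 - δ)) / (1 - δ)) :=
          abs_dotProduct_le _
            (abs_Qfun_sub_le hδ0 hδ1 hP hu zero_le_one hσ hπ hW hV hdist i s)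
      _ ≤ ε * (E * (1 / (1 - δ)) / (1 - δ)) := by gcongr
      _ = E * ε / (1 - δ) ^ 2 := by field_simp
  refine (hp.sq_l2norm_sub_le (hπ i s)).trans (mul_le_mul_of_nonneg_left ?_ hη)
  rw [dotProduct_comm, sub_dotProduct] at hdrift
  rw [hσi]
  linarith [(abs_le.1 hdrift).1]

lemma weightedSqDist_le_value_sub (hδ0 : 0 ≤ δ) (hδ1 : δ < 1) (hP : IsKernel P)
    (hu : ∀ s a, |u s a| ≤ 1) (hπ : IsPolicy π) (hσ : IsPolicy σ) (hσi : σ i = π i)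
    (hV : IsValueFun δ P u π V) (hW : IsValueFun δ P u σ W)
    (hW' : IsValueFun δ P u (Function.update σ i p) W') (hη : 0 ≤ η) (hν : IsProbVec ν)
    (hp : ∀ s, IsProjSimplex (π i s + η • Qfun δ P u π V i s) (p s))
    (hmove : ∀ s, ∑ x, |(p s - π i s) x| ≤ ε)
    (hdist : ∀ s, ∑ j, ∑ x, |(σ j s - π j s) x| ≤ E) :
    weightedSqDist ν p (π i) ≤ η * (ν ⬝ᵥ W' - ν ⬝ᵥ W + E * ε / (1 - δ) ^ 3) := by
  classical
  have hg := sub_pos.2 hδ1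
  have hstoch := (hσ.update fun s ↦ (hp s).1).transMat_mem_rowStochastic hP
  set d := dvisit δ P (Function.update σ i p) ν
  have hd : IsProbVec d := isProbVec_discountedOccupation hδ0 hδ1 hstoch hν
  have hνd : (1 - δ) • ν ≤ d := mul_le_discountedOccupation hδ0 hδ1 hstoch hν
  refine le_of_mul_le_mul_left ?_ hg
  calc (1 - δ) * weightedSqDist ν p (π i)
      = ((1 - δ) • ν) ⬝ᵥ fun s ↦ l2norm (p s - π i s) ^ 2 := by
        rw [weightedSqDist, smul_dotProduct, smul_eq_mul]
    _ ≤ d ⬝ᵥ fun s ↦ l2norm (p s - π i s) ^ 2 :=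
        dotProduct_le_dotProduct_of_nonneg_right hνd fun s ↦ sq_nonneg _
    _ ≤ d ⬝ᵥ (η • ((fun s ↦ Qfun δ P u σ W i s ⬝ᵥ (p s - σ i s)) +
          fun _ ↦ E * ε / (1 - δ) ^ 2)) :=
        hd.dotProduct_mono fun s ↦ sq_l2norm_sub_le_mul_Qfun_dotProduct hδ0 hδ1 hP hu hπ hσ hσi
          hV hW hη (hp s) (hmove s) hdist
    _ = η * ((1 - δ) * (ν ⬝ᵥ W' - ν ⬝ᵥ W) + E * ε / (1 - δ) ^ 2) := by
        rw [dotProduct_smul, dotProduct_add, hd.dotProduct_const,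
          dvisit_dotProduct_Qfun hδ0 hδ1 hP hσ (fun s ↦ (hp s).1) hW hW' hν, smul_eq_mul]
    _ = (1 - δ) * (η * (ν ⬝ᵥ W' - ν ⬝ᵥ W + E * ε / (1 - δ) ^ 3)) := by field_simp

end SinglePlayer

variable {u : I → S → (∀ i, A i) → ℝ} {V : I → (∀ i, S → A i → ℝ) → S → ℝ}
  {Φ : (∀ i, S → A i → ℝ) → S → ℝ}

lemma IsProjAscentStep.isPolicy (h : IsProjAscentStep δ P u V η π π') : IsPolicy π' :=
  fun i s ↦ (h i s).1

lemma IsProjAscentStep.sum_weightedSqDist_le (h : IsProjAscentStep δ P u V η π π')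
    (hδ0 : 0 ≤ δ) (hδ1 : δ < 1) (hP : IsKernel P) (hu : ∀ i s a, |u i s a| ≤ 1)
    (hV : ∀ i π, IsPolicy π → IsValueFun δ P (u i) π (V i π)) (hΦ : IsAlphaPotential α V Φ)
    (hη : 0 ≤ η) (hν : IsProbVec ν) (hπ : IsPolicy π)
    (hmove : ∀ i s, ∑ x, |(π' i s - π i s) x| ≤ ε) :
    ∑ i, weightedSqDist ν (π' i) (π i) ≤ η * (ν ⬝ᵥ Φ π' - ν ⬝ᵥ Φ π +
      Fintype.card I * (α + Fintype.card I * ε * ε / (1 - δ) ^ 3)) := by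
  suffices hJ : ∀ J : Finset I, ∑ i ∈ J, weightedSqDist ν (π' i) (π i) ≤
      η * (ν ⬝ᵥ Φ (J.piecewise π' π) - ν ⬝ᵥ Φ π +
        #J * (α + Fintype.card I * ε * ε / (1 - δ) ^ 3)) by
    simpa only [piecewise_univ, card_univ] using hJ univ
  intro J
  induction J using Finset.induction with
  | empty => simp
  | insert i J hi ih =>
    set σ := J.piecewise π' π
    have hσ : IsPolicy σ := h.isPolicy.piecewise hπ J
    have hascent : weightedSqDist ν (π' i) (π i) ≤ η * (ν ⬝ᵥ V i (Function.update σ i (π' i)) -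
        ν ⬝ᵥ V i σ + Fintype.card I * ε * ε / (1 - δ) ^ 3) :=
      weightedSqDist_le_value_sub hδ0 hδ1 hP (hu i) hπ hσ (J.piecewise_eq_of_notMem π' π hi)
        (hV i π hπ) (hV i σ hσ) (hV i _ (hσ.update (h.isPolicy i))) hη hν (h i) (hmove i)
        fun s ↦ sum_abs_piecewise_sub_le fun j ↦ hmove j s
    have hpotential := mul_le_mul_of_nonneg_left (hΦ.value_sub_le hσ (h.isPolicy i) hν) hη
    rw [sum_insert hi, card_insert_of_notMem hi, piecewise_insert]
    push_cast
    linarith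

lemma IsProjAscentStep.sum_abs_sub_le (h : IsProjAscentStep δ P u V η π π')
    (hδ0 : 0 ≤ δ) (hδ1 : δ < 1) (hP : IsKernel P) (hu : ∀ i s a, |u i s a| ≤ 1)
    (hV : ∀ i π, IsPolicy π → IsValueFun δ P (u i) π (V i π)) (hη : 0 ≤ η) (hπ : IsPolicy π)
    {n : ℕ} (hn : ∀ i, Fintype.card (A i) ≤ n) (i : I) (s : S) :
    ∑ x, |(π' i s - π i s) x| ≤ η * n / (1 - δ) := by
  calc ∑ x, |(π' i s - π i s) x| ≤ η * Fintype.card (A i) * (1 / (1 - δ)) :=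
        (h i s).sum_abs_sub_le (hπ i s) hη (one_div_nonneg.2 (sub_pos.2 hδ1).le)
          (abs_Qfun_le hδ0 hδ1 hP (hu i) hπ (hV i π hπ) i s)
    _ ≤ η * n * (1 / (1 - δ)) := by gcongr; exact hn i
    _ = η * n / (1 - δ) := by ring

lemma sum_range_weightedSqDist_le {ρ : ℕ → ∀ i, S → A i → ℝ} {C : ℝ}
    (hρ : ∀ t, IsPolicy (ρ t)) (hstep : ∀ t, IsProjAscentStep δ P u V η (ρ t) (ρ (t + 1)))
    (hδ0 : 0 ≤ δ) (hδ1 : δ < 1) (hP : IsKernel P) (hu : ∀ i s a, |u i s a| ≤ 1)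
    (hV : ∀ i π, IsPolicy π → IsValueFun δ P (u i) π (V i π)) (hΦ : IsAlphaPotential α V Φ)
    (hη : 0 ≤ η) (hν : IsProbVec ν) {n : ℕ} (hn : ∀ i, Fintype.card (A i) ≤ n) (T : ℕ)
    (hC : ν ⬝ᵥ Φ (ρ T) - ν ⬝ᵥ Φ (ρ 0) ≤ C) :
    ∑ t ∈ range T, ∑ i, weightedSqDist ν (ρ (t + 1) i) (ρ t i) ≤
      η * (C + T * (Fintype.card I * α +
        (Fintype.card I : ℝ) ^ 2 * n ^ 2 * η ^ 2 / (1 - δ) ^ 5)) := by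
  have hg : 1 - δ ≠ 0 := (sub_pos.2 hδ1).ne'
  set N := (Fintype.card I : ℝ)
  set ε := η * n / (1 - δ) with hε
  have hone (t : ℕ) : ∑ i, weightedSqDist ν (ρ (t + 1) i) (ρ t i) ≤
      η * (ν ⬝ᵥ Φ (ρ (t + 1)) - ν ⬝ᵥ Φ (ρ t) + N * (α + N * ε * ε / (1 - δ) ^ 3)) :=
    (hstep t).sum_weightedSqDist_le hδ0 hδ1 hP hu hV hΦ hη hν (hρ t)
      ((hstep t).sum_abs_sub_le hδ0 hδ1 hP hu hV hη (hρ t) hn)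
  calc ∑ t ∈ range T, ∑ i, weightedSqDist ν (ρ (t + 1) i) (ρ t i)
      ≤ ∑ t ∈ range T,
          η * (ν ⬝ᵥ Φ (ρ (t + 1)) - ν ⬝ᵥ Φ (ρ t) + N * (α + N * ε * ε / (1 - δ) ^ 3)) :=
        sum_le_sum fun t _ ↦ hone t
    _ = η * (ν ⬝ᵥ Φ (ρ T) - ν ⬝ᵥ Φ (ρ 0) + T * (N * (α + N * ε * ε / (1 - δ) ^ 3))) := by
        rw [← mul_sum, sum_add_distrib, sum_range_sub (fun t ↦ ν ⬝ᵥ Φ (ρ t)), sum_const,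
          card_range, nsmul_eq_mul]
    _ ≤ η * (C + T * (N * (α + N * ε * ε / (1 - δ) ^ 3))) := by gcongr
    _ = η * (C + T * (N * α + N ^ 2 * n ^ 2 * η ^ 2 / (1 - δ) ^ 5)) := by
        rw [hε]; field_simp

lemma IsProjAscentStep.mul_Qfun_dotProduct_sub_le (h : IsProjAscentStep δ P u V η π π')
    (hδ0 : 0 ≤ δ) (hδ1 : δ < 1) (hP : IsKernel P) (hu : ∀ i s a, |u i s a| ≤ 1)
    (hV : ∀ i π, IsPolicy π → IsValueFun δ P (u i) π (V i π)) (hη : 0 ≤ η) (hπ : IsPolicy π)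
    {n : ℕ} (hn : ∀ i, Fintype.card (A i) ≤ n) (hηn : η * √n ≤ 1 - δ) {i : I} {s : S}
    {z : A i → ℝ} (hz : IsProbVec z) :
    η * (Qfun δ P (u i) π (V i π) i s ⬝ᵥ (z - π i s)) ≤ 3 * l2norm (π' i s - π i s) := by
  have hg := sub_pos.2 hδ1
  have hgrad : η * l2norm (Qfun δ P (u i) π (V i π) i s) ≤ 1 :=
    calc η * l2norm (Qfun δ P (u i) π (V i π) i s)
        ≤ η * (√(Fintype.card (A i)) * (1 / (1 - δ))) := by
          gcongr
          exact l2norm_le_sqrt_card_mul (by positivity)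
            (abs_Qfun_le hδ0 hδ1 hP (hu i) hπ (hV i π hπ) i s)
      _ ≤ η * (√n * (1 / (1 - δ))) := by gcongr; exact hn i
      _ = η * √n / (1 - δ) := by ring
      _ ≤ 1 := (div_le_one hg).2 hηn
  refine ((h i s).dotProduct_sub_le hη hz).trans
    (mul_le_mul_of_nonneg_right ?_ (l2norm_nonneg _))
  linarith [Real.sqrt_two_lt_three_halves]

lemma IsProjAscentStep.mul_value_sub_le [DecidableEq S] (h : IsProjAscentStep δ P u V η π π')
    (hδ0 : 0 ≤ δ) (hδ1 : δ < 1) (hP : IsKernel P) (hu : ∀ i s a, |u i s a| ≤ 1)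
    (hV : ∀ i π, IsPolicy π → IsValueFun δ P (u i) π (V i π)) (hη : 0 ≤ η) (hπ : IsPolicy π)
    {n : ℕ} (hn : ∀ i, Fintype.card (A i) ≤ n) (hηn : η * √n ≤ 1 - δ) (hμ : IsProbVec μ)
    (hκ : ∀ π, IsPolicy π → ∀ s, dvisit δ P π μ s ≤ κ * ν s) (i : I) {p : S → A i → ℝ}
    (hp : ∀ s, IsProbVec (p s)) :
    η * (1 - δ) * (μ ⬝ᵥ V i (Function.update π i p) - μ ⬝ᵥ V i π) ≤
      3 * √(κ * weightedSqDist ν (π' i) (π i)) := by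
  set d := dvisit δ P (Function.update π i p) μ
  have hd : IsProbVec d := isProbVec_discountedOccupation hδ0 hδ1
    ((hπ.update hp).transMat_mem_rowStochastic hP) hμ
  calc η * (1 - δ) * (μ ⬝ᵥ V i (Function.update π i p) - μ ⬝ᵥ V i π)
      = d ⬝ᵥ (η • fun s ↦ Qfun δ P (u i) π (V i π) i s ⬝ᵥ (p s - π i s)) := by
        rw [dotProduct_smul, dvisit_dotProduct_Qfun hδ0 hδ1 hP hπ hp (hV i π hπ)
          (hV i _ (hπ.update hp)) hμ, smul_eq_mul, mul_assoc]
    _ ≤ d ⬝ᵥ ((3 : ℝ) • fun s ↦ l2norm (π' i s - π i s)) := hd.dotProduct_mono fun s ↦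
        h.mul_Qfun_dotProduct_sub_le hδ0 hδ1 hP hu hV hη hπ hn hηn (hp s)
    _ = 3 * (d ⬝ᵥ fun s ↦ l2norm (π' i s - π i s)) := dotProduct_smul _ _ _
    _ ≤ 3 * √(d ⬝ᵥ fun s ↦ l2norm (π' i s - π i s) ^ 2) := by
        gcongr
        exact Real.le_sqrt_of_sq_le (hd.sq_dotProduct_le _)
    _ ≤ 3 * √((κ • ν) ⬝ᵥ fun s ↦ l2norm (π' i s - π i s) ^ 2) := by
        gcongr
        exact dotProduct_le_dotProduct_of_nonneg_right (hκ _ (hπ.update hp)) fun s ↦ sq_nonneg _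
    _ = 3 * √(κ * weightedSqDist ν (π' i) (π i)) := by
        rw [weightedSqDist, smul_dotProduct, smul_eq_mul]

lemma mul_sum_range_value_sub_le [DecidableEq S] {ρ : ℕ → ∀ i, S → A i → ℝ} {C : ℝ}
    (hρ : ∀ t, IsPolicy (ρ t)) (hstep : ∀ t, IsProjAscentStep δ P u V η (ρ t) (ρ (t + 1)))
    (hδ0 : 0 ≤ δ) (hδ1 : δ < 1) (hP : IsKernel P) (hu : ∀ i s a, |u i s a| ≤ 1)
    (hV : ∀ i π, IsPolicy π → IsValueFun δ P (u i) π (V i π)) (hΦ : IsAlphaPotential α V Φ)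
    (hη : 0 ≤ η) (hμ : IsProbVec μ) (hν : IsProbVec ν) {n : ℕ}
    (hn : ∀ i, Fintype.card (A i) ≤ n) (hηn : η * √n ≤ 1 - δ) (hκ0 : 0 ≤ κ)
    (hκ : ∀ π, IsPolicy π → ∀ s, dvisit δ P π μ s ≤ κ * ν s) (T : ℕ)
    (hC : ν ⬝ᵥ Φ (ρ T) - ν ⬝ᵥ Φ (ρ 0) ≤ C) (i : ℕ → I) {p : ∀ t, S → A (i t) → ℝ}
    (hp : ∀ t s, IsProbVec (p t s)) :
    η * (1 - δ) * ∑ t ∈ range T, (μ ⬝ᵥ V (i t) (Function.update (ρ t) (i t) (p t)) -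
      μ ⬝ᵥ V (i t) (ρ t)) ≤
      3 * √(T * (κ * (η * (C + T * (Fintype.card I * α +
        (Fintype.card I : ℝ) ^ 2 * n ^ 2 * η ^ 2 / (1 - δ) ^ 5))))) := by
  have hdist0 (t : ℕ) (j : I) : 0 ≤ weightedSqDist ν (ρ (t + 1) j) (ρ t j) :=
    weightedSqDist_nonneg hν _ _
  rw [mul_sum]
  calc _ ≤ ∑ t ∈ range T, 3 * √(κ * weightedSqDist ν (ρ (t + 1) (i t)) (ρ t (i t))) :=
        sum_le_sum fun t _ ↦ (hstep t).mul_value_sub_le hδ0 hδ1 hP hu hV hη (hρ t) hn hηn hμ hκ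
          (i t) (hp t)
    _ ≤ 3 * ∑ t ∈ range T, √(κ * ∑ j, weightedSqDist ν (ρ (t + 1) j) (ρ t j)) := by
        rw [← mul_sum]
        gcongr with t
        exact single_le_sum (fun j _ ↦ hdist0 t j) (mem_univ (i t))
    _ ≤ 3 * √(T * (κ * ∑ t ∈ range T, ∑ j, weightedSqDist ν (ρ (t + 1) j) (ρ t j))) := by
        gcongr
        rw [mul_sum]
        refine (sum_sqrt_le_sqrt_card_mul_sum _ fun t ↦
          mul_nonneg hκ0 (sum_nonneg fun j _ ↦ hdist0 t j)).trans_eq ?_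
        rw [card_range]
    _ ≤ _ := by
        gcongr
        exact sum_range_weightedSqDist_le hρ hstep hδ0 hδ1 hP hu hV hΦ hη hν hn T hC

end ProjectedAscent

section StepSize

variable {g N n κ Y η : ℝ}

lemma stepSize_eq {C α T : ℝ} (hT : 0 < T) :
    g ^ ((5 : ℝ) / 2) * √(C + N ^ 2 * α * T) / (2 * N * n * √T) =
      g ^ ((5 : ℝ) / 2) * √(C / T + N ^ 2 * α) / (2 * N * n) := by
  have hsum : C / T + N ^ 2 * α = (C + N ^ 2 * α * T) / T := by field_simp
  rw [hsum, Real.sqrt_div' _ hT.le, mul_div_assoc', div_div, mul_comm √T]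

lemma four_mul_sq_eq_of_stepSize (hg : 0 ≤ g) (hN : N ≠ 0) (hn : n ≠ 0) (hY : 0 ≤ Y)
    (hη : η = g ^ ((5 : ℝ) / 2) * √Y / (2 * N * n)) :
    4 * (N ^ 2 * n ^ 2 * η ^ 2) = g ^ 5 * Y := by
  have hpow : (g ^ ((5 : ℝ) / 2)) ^ 2 = g ^ 5 := by
    rw [← Real.rpow_mul_natCast hg, ← Real.rpow_natCast]
    norm_num
  rw [hη, div_pow, mul_pow, hpow, Real.sq_sqrt hY]
  field_simp
  ring

lemma regretBound_mul_stepSize (hg : 0 < g) (hN : 0 < N) (hn : 0 < n) (hκ : 0 ≤ κ) (hY : 0 ≤ Y)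
    (hη : η = g ^ ((5 : ℝ) / 2) * √Y / (2 * N * n)) :
    6 * √2 * √(κ * n * N) * g ^ (-(9 : ℝ) / 4) * Y ^ ((1 : ℝ) / 4) * (η * g) =
      6 * √(κ * η * Y) := by
  have hη0 : 0 ≤ η := hη ▸ by positivity
  have hstep : η * (2 * N * n) = g ^ ((5 : ℝ) / 2) * √Y := by
    rw [hη, div_mul_cancel₀ _ (by positivity)]
  have hgpow : (g ^ (-(9 : ℝ) / 4)) ^ 2 * g ^ ((5 : ℝ) / 2) * g ^ 2 = 1 := by
    rw [← Real.rpow_mul_natCast hg.le, ← Real.rpow_natCast g 2, ← Real.rpow_add hg,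
      ← Real.rpow_add hg]
    norm_num
  have hYpow : (Y ^ ((1 : ℝ) / 4)) ^ 2 = √Y := by
    rw [← Real.rpow_mul_natCast hY, Real.sqrt_eq_rpow]
    norm_num
  have hsqrt : √(κ * η * Y) =
      √2 * √(κ * n * N) * g ^ (-(9 : ℝ) / 4) * Y ^ ((1 : ℝ) / 4) * (η * g) := by
    rw [Real.sqrt_eq_iff_eq_sq (by positivity) (by positivity)]
    simp only [mul_pow]
    rw [Real.sq_sqrt zero_le_two, Real.sq_sqrt (by positivity), hYpow]
    calc κ * η * Y = κ * η * ((g ^ (-(9 : ℝ) / 4)) ^ 2 * g ^ ((5 : ℝ) / 2) * g ^ 2) * √Y ^ 2 := by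
          rw [hgpow, Real.sq_sqrt hY, mul_one]
      _ = κ * η * (g ^ (-(9 : ℝ) / 4)) ^ 2 * g ^ 2 * √Y * (g ^ ((5 : ℝ) / 2) * √Y) := by ring
      _ = 2 * (κ * n * N) * (g ^ (-(9 : ℝ) / 4)) ^ 2 * √Y * (η ^ 2 * g ^ 2) := by
          rw [← hstep]
          ring
  rw [hsqrt]
  ring

lemma add_mul_add_quarter_le {C α T : ℝ} (hT : 0 < T) (hN : 1 ≤ N) (hα : 0 ≤ α) :
    C + T * (N * α + (C / T + N ^ 2 * α) / 4) ≤ 5 / 4 * (T * (C / T + N ^ 2 * α)) := by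
  have hNα : N * α ≤ N ^ 2 * α := by gcongr; exact le_self_pow₀ hN two_ne_zero
  have hCT : T * (C / T) = C := mul_div_cancel₀ C hT.ne'
  nlinarith

lemma average_le_of_stepSize_mul_le {C α T R B : ℝ} (hg : 0 < g) (hN : 1 ≤ N) (hη : 0 < η)
    (hκ : 0 ≤ κ) (hα : 0 ≤ α) (hT : 0 < T) (hY : Y = C / T + N ^ 2 * α)
    (hηY : 4 * (N ^ 2 * n ^ 2 * η ^ 2) = g ^ 5 * Y) (hB : B * (η * g) = 6 * √(κ * η * Y))
    (hR : η * g * R ≤ 3 * √(T * (κ * (η * (C + T * (N * α + N ^ 2 * n ^ 2 * η ^ 2 / g ^ 5)))))) :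
    1 / T * R ≤ B := by
  have hquarter : N ^ 2 * n ^ 2 * η ^ 2 / g ^ 5 = Y / 4 := by
    rw [div_eq_div_iff (by positivity) four_ne_zero]
    linarith
  refine le_of_mul_le_mul_right ?_ (mul_pos (mul_pos hη hg) hT)
  calc 1 / T * R * (η * g * T) = η * g * R := by field_simp
    _ ≤ 3 * √(T * (κ * (η * (5 / 4 * (T * Y))))) := by
        refine hR.trans ?_
        gcongr
        rw [hquarter, hY]
        exact add_mul_add_quarter_le hT hN hα
    _ ≤ 3 * √((2 * T) ^ 2 * (κ * η * Y)) := by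
        have hY0 : 0 ≤ Y :=
          (mul_nonneg_iff_of_pos_left (pow_pos hg 5)).1 (hηY ▸ by positivity)
        have hprod : 0 ≤ T ^ 2 * (κ * η * Y) := by positivity
        gcongr 3 * √?_
        linarith
    _ = B * (η * g) * T := by
        rw [Real.sqrt_mul (by positivity), Real.sqrt_sq (by positivity), hB]
        ring
    _ = B * (η * g * T) := mul_assoc _ _ _

lemma two_div_le_of_le_stepSize_mul_sqrt {B : ℝ} (hg : 0 < g) (hg1 : g ≤ 1) (hN : 1 ≤ N)
    (hn : 1 ≤ n) (hη : 0 < η) (hκ : 1 ≤ κ) (hηn : g ≤ η * √n)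
    (hηY : 4 * (N ^ 2 * n ^ 2 * η ^ 2) = g ^ 5 * Y) (hB : B * (η * g) = 6 * √(κ * η * Y)) :
    2 / g ≤ B := by
  have hηY' : η ≤ Y := by
    have hgn : g ≤ η * n := hηn.trans (by gcongr; exact Real.sqrt_le_self_iff.2 (Or.inr hn))
    refine le_of_mul_le_mul_left ?_ (pow_pos hg 5)
    calc g ^ 5 * η ≤ g * η := by gcongr; exact pow_le_of_le_one hg.le hg1 (by norm_num)
      _ ≤ η * n * η := by gcongr
      _ = 1 * (1 * n * η ^ 2) := by ring
      _ ≤ 4 * (N ^ 2 * n ^ 2 * η ^ 2) := by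
          gcongr
          · norm_num
          · exact one_le_pow₀ hN
          · exact le_self_pow₀ hn two_ne_zero
      _ = g ^ 5 * Y := hηY
  refine le_of_mul_le_mul_right ?_ (mul_pos hη hg)
  calc 2 / g * (η * g) = 2 * √(1 * η * η) := by
        rw [one_mul, Real.sqrt_mul_self hη.le]
        field_simp
    _ ≤ 6 * √(κ * η * Y) := by gcongr; norm_num
    _ = B * (η * g) := hB.symm

end StepSize

section Regret

variable {S I : Type*} {A : I → Type*} [Fintype S] [DecidableEq S] [Fintype I] [DecidableEq I]
  [∀ i, Fintype (A i)] [∀ i, DecidableEq (A i)]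

lemma sum_Icc_one_eq_sum_range (f : ℕ → ℝ) (T : ℕ) :
    ∑ t ∈ Icc 1 T, f t = ∑ t ∈ range T, f (t + 1) := by
  rw [range_eq_Ico, sum_Ico_add' f 0 T 1]
  rfl

lemma one_div_mul_sum_range_le {f : ℕ → ℝ} {b : ℝ} {T : ℕ} (hT : 1 ≤ T) (hf : ∀ t, f t ≤ b) :
    1 / (T : ℝ) * ∑ t ∈ range T, f t ≤ b := by
  rw [one_div, inv_mul_le_iff₀ (by positivity)]
  simpa using sum_le_card_nsmul (range T) f b fun t _ ↦ hf t

theorem projected_gradient_ascent_nash_regret_general {δ : ℝ} (hδ0 : 0 ≤ δ) (hδ1 : δ < 1)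
    {P : S → (∀ i, A i) → S → ℝ} (hP : IsKernel P) {u : I → S → (∀ i, A i) → ℝ}
    (hu : ∀ i s a, |u i s a| ≤ 1) {n : ℕ} (hn : ∀ i, Fintype.card (A i) ≤ n)
    {V : I → (∀ i, S → A i → ℝ) → S → ℝ}
    (hV : ∀ i π, IsPolicy π → IsValueFun δ P (u i) π (V i π))
    {α : ℝ} {Φ : (∀ i, S → A i → ℝ) → S → ℝ} (hΦ : IsAlphaPotential α V Φ)
    {μ ν : S → ℝ} (hμ : IsProbVec μ) (hν : IsProbVec ν) {C : ℝ} (hC0 : 0 < C)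
    (hC : ∀ π π', IsPolicy π → IsPolicy π' → ν ⬝ᵥ Φ π - ν ⬝ᵥ Φ π' ≤ C) {κ : ℝ}
    (hκ : ∀ π, IsPolicy π → ∀ s, dvisit δ P π μ s ≤ κ * ν s) {T : ℕ} (hT : 1 ≤ T) {η : ℝ}
    (hη : η = (1 - δ) ^ ((5 : ℝ) / 2) * √(C + (Fintype.card I : ℝ) ^ 2 * α * T) /
      (2 * Fintype.card I * n * √T))
    {π : ℕ → ∀ i, S → A i → ℝ} (hstep : ∀ t, IsProjAscentStep δ P u V η (π t) (π (t + 1)))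
    (i : ℕ → I) {p : ∀ t, S → A (i t) → ℝ} (hp : ∀ t s, IsProbVec (p t s)) :
    1 / (T : ℝ) * ∑ t ∈ Icc 1 T, (μ ⬝ᵥ V (i t) (Function.update (π t) (i t) (p t)) -
        μ ⬝ᵥ V (i t) (π t)) ≤
      6 * √2 * √(κ * n * Fintype.card I) * (1 - δ) ^ (-(9 : ℝ) / 4) *
        (C / T + (Fintype.card I : ℝ) ^ 2 * α) ^ ((1 : ℝ) / 4) := by
  have hg : 0 < 1 - δ := sub_pos.2 hδ1
  have hρ (t : ℕ) : IsPolicy (π (t + 1)) := (hstep t).isPolicy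
  obtain ⟨s⟩ := hμ.nonempty
  have hT0 : (0 : ℝ) < T := by exact_mod_cast hT
  have hN : (1 : ℝ) ≤ Fintype.card I := by exact_mod_cast Fintype.card_pos_iff.2 ⟨i 0⟩
  have hn1 : (1 : ℝ) ≤ n := by
    exact_mod_cast (Fintype.card_pos_iff.2 (hp 0 s).nonempty).trans_le (hn (i 0))
  have hα : 0 ≤ α := hΦ.nonneg (hρ 0) s (i 0)
  have hκ1 : 1 ≤ κ := (isProbVec_discountedOccupation hδ0 hδ1
    ((hρ 0).transMat_mem_rowStochastic hP) hμ).one_le_of_le_mul hν (hκ _ (hρ 0))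
  set N := (Fintype.card I : ℝ)
  set Y := C / T + N ^ 2 * α with hY
  have hY0 : 0 < Y := by positivity
  rw [stepSize_eq hT0, ← hY] at hη
  have hη0 : 0 < η := hη ▸ by positivity
  have hsq := four_mul_sq_eq_of_stepSize hg.le (by positivity) (by positivity) hY0.le hη
  have hbound := regretBound_mul_stepSize hg (by positivity) (by positivity)
    (zero_le_one.trans hκ1) hY0.le hη
  rw [sum_Icc_one_eq_sum_range]
  rcases le_total (η * √n) (1 - δ) with hsmall | hlarge
  · exact average_le_of_stepSize_mul_le hg hN hη0 (zero_le_one.trans hκ1) hα hT0 hY hsq hbound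
      (mul_sum_range_value_sub_le hρ (fun t ↦ hstep (t + 1)) hδ0 hδ1 hP hu hV hΦ hη0.le hμ hν hn
        hsmall (zero_le_one.trans hκ1) hκ T (hC _ _ (hρ T) (hρ 0)) (fun t ↦ i (t + 1))
        fun t ↦ hp (t + 1))
  · have hcrude : 2 / (1 - δ) ≤ _ :=
      two_div_le_of_le_stepSize_mul_sqrt hg (by linarith) hN hn1 hη0 hκ1 hlarge hsq hbound
    refine (one_div_mul_sum_range_le hT fun t ↦ ?_).trans hcrude
    simpa only [mul_one] using (hV _ _ ((hρ t).update (hp (t + 1)))).dotProduct_sub_le hδ0 hδ1 hP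
      (hu _) ((hρ t).update (hp (t + 1))) (hρ t) (hV _ _ (hρ t)) hμ

end Regret

/-- **Theorem 1.** Nash-regret bound for projected gradient ascent in Markov `α`-potential
games.  The Nash-regret `(1/T)·∑_{t=1}^T max_i sup_{π_i'} (V_i(μ,(π_i',π_{-i}^{(t)})) − V_i(μ,π^{(t)}))`
is bounded by the stated quantity; equivalently (as formalized here), the bound holds for every
selection of a player `isel t` and a deviation policy `devsel t` at each step `t`. -/
theorem projected_gradient_ascent_nash_regret
    {S I : Type*} [Fintype S] [Nonempty S] [DecidableEq S]
    [Fintype I] [Nonempty I] [DecidableEq I]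
    {A : I → Type*} [∀ i, Fintype (A i)] [∀ i, Nonempty (A i)] [∀ i, DecidableEq (A i)]
    (δ : ℝ) (hδ : 0 < δ) (hδ1 : δ < 1)
    (P : S → (∀ i, A i) → S → ℝ) (hP : IsKernel P)
    (u : I → S → (∀ i, A i) → ℝ) (hu : ∀ i s a, u i s a ∈ Set.Icc (0:ℝ) 1)
    (Abar : ℕ) (hAbar : Abar = Finset.univ.sup' Finset.univ_nonempty
      (fun i : I => Fintype.card (A i)))
    (α : ℝ) (hα : 0 ≤ α)
    (V : I → (∀ j, S → A j → ℝ) → S → ℝ)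
    (hV : ∀ i π, IsPolicy π → IsValueFun δ P (u i) π (V i π))
    (Φ : (∀ j, S → A j → ℝ) → S → ℝ)
    (hpot : ∀ (s : S) (i : I) (π : ∀ j, S → A j → ℝ), IsPolicy π →
      ∀ (πi' : S → A i → ℝ), (∀ s', IsProbVec (πi' s')) →
        |(Φ (Function.update π i πi') s - Φ π s) -
          (V i (Function.update π i πi') s - V i π s)| ≤ α)
    (CΦ : ℝ) (hCΦpos : 0 < CΦ)
    (hCΦ : ∀ (μ' : S → ℝ), IsProbVec μ' → ∀ π π', IsPolicy π → IsPolicy π' →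
      |(∑ s, μ' s * Φ π s) - (∑ s, μ' s * Φ π' s)| ≤ CΦ)
    (μ : S → ℝ) (hμ : IsProbVec μ)
    -- distribution mismatch coefficient
    (ν : S → ℝ) (hν : IsProbVec ν) (κt : ℝ) (hκt : 1 ≤ κt)
    (hmismatch : ∀ π, IsPolicy π → ∀ s, dvisit δ P π μ s ≤ κt * ν s)
    (T : ℕ) (hT : 1 ≤ T)
    -- the step size
    (η : ℝ)
    (hη : η = (1 - δ) ^ ((5:ℝ)/2) * Real.sqrt (CΦ + (Fintype.card I : ℝ) ^ 2 * α * T) /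
      (2 * (Fintype.card I) * Abar * Real.sqrt T))
    (hηsmall : η ≤ (1 - δ) / Real.sqrt Abar)
    -- the projected gradient-ascent iterates
    (πseq : ℕ → ∀ j, S → A j → ℝ)
    (hinit : ∀ (i : I) (s : S) (ai : A i), πseq 0 i s ai = 1 / (Fintype.card (A i)))
    (hstep : ∀ (t : ℕ) (i : I) (s : S),
      IsProjSimplex
        (fun ai => πseq t i s ai + η * Qfun δ P (u i) (πseq t) (V i (πseq t)) i s ai)
        (πseq (t + 1) i s)) :
    -- conclusion: the Nash-regret bound
    ∀ (isel : ℕ → I) (devsel : ∀ t : ℕ, S → A (isel t) → ℝ),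
      (∀ t s, IsProbVec (devsel t s)) →
      (1 / (T : ℝ)) * ∑ t ∈ Finset.Icc 1 T,
          ((∑ s, μ s * V (isel t) (Function.update (πseq t) (isel t) (devsel t)) s) -
            (∑ s, μ s * V (isel t) (πseq t) s)) ≤
        6 * Real.sqrt 2 * Real.sqrt (κt * Abar * (Fintype.card I)) *
          (1 - δ) ^ (-(9:ℝ)/4) * (CΦ / T + (Fintype.card I : ℝ) ^ 2 * α) ^ ((1:ℝ)/4) := by
  intro isel devsel hdev
  exact projected_gradient_ascent_nash_regret_general hδ.le hδ1 hP
    (fun i s a ↦ abs_le.2 ⟨by linarith [(hu i s a).1], (hu i s a).2⟩)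
    (fun i ↦ hAbar ▸ le_sup' (fun i ↦ Fintype.card (A i)) (mem_univ i)) hV hpot hμ hν hCΦpos
    (fun π π' hπ hπ' ↦ (le_abs_self _).trans (hCΦ ν hν π π' hπ hπ')) hmismatch hT hη hstep isel
    hdev
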